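/- With g(τ) = 2Kτ² + τ⁴ + (8/(15√γ))τ⁵, K < 0, and τ₀ the positive stationary point of g, the stationary phase approximation of J(S) = 2∫_0^∞ e^{-(i/2)S⁵ g(τ)} τ dτ yields S^{5/2}|J(S)| → 2τ₀ √(4π/g''(τ₀)) = √(2π/(1+τ₀/√γ)) as S → +∞. -/

import Mathlib

open Real Complex Filter intervalIntegral

/-!
Under `u = τ²` the amplitude `τ dτ` becomes `du / 2` and the phase becomes `2Ku + u² + c u^(5/2)`,
which is convex on `[0, ∞)`. For a convex phase `φ` with stationary point `t` and `A = φ''(t) > 0`,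
van der Corput's first-derivative test makes the part of `∫ e^{-ilφ}` outside the window
`|x - t| ≤ M / √l` of size `O(1 / (M √l))`. On the window, rescaling by `√l` and dominated
convergence lead to the truncated Fresnel integral `∫_{-M}^{M} e^{-iAv²/2} dv`, whose value as
`M → ∞` is the boundary case `Re b = 0` of the Gaussian integral.
-/

open Set MeasureTheory Topology

theorem tendsto_of_tendsto_of_eventually_dist_le {ι κ E : Type*} [PseudoMetricSpace E]
    {l : Filter ι} {l' : Filter κ} [l'.NeBot] {f : ι → E} {F : κ → ι → E} {g : κ → E} {y : E}
    {e : κ → ℝ} (hF : ∀ᶠ k in l', Tendsto (F k) l (𝓝 (g k))) (hg : Tendsto g l' (𝓝 y))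
    (hdist : ∀ᶠ k in l', ∀ᶠ i in l, dist (f i) (F k i) ≤ e k) (he : Tendsto e l' (𝓝 0)) :
    Tendsto f l (𝓝 y) := by
  refine Metric.tendsto_nhds.2 fun ε hε => ?_
  have hε3 : 0 < ε / 3 := by positivity
  obtain ⟨k, hFk, hgk, hdk, hek⟩ := (hF.and ((Metric.tendsto_nhds.1 hg _ hε3).and
    (hdist.and (he.eventually_lt_const hε3)))).exists
  filter_upwards [hdk, Metric.tendsto_nhds.1 hFk _ hε3] with i hfF hFg
  linarith [dist_triangle4 (f i) (F k i) (g k) y]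

theorem tendsto_div_sq_of_hasDerivAt {f f' : ℝ → ℝ} {A t : ℝ}
    (hf : ∀ᶠ x in 𝓝 t, HasDerivAt f (f' x) x) (hf0 : f' t = 0) (hf' : HasDerivAt f' A t) :
    Tendsto (fun x => (f x - f t) / (x - t) ^ 2) (𝓝[≠] t) (𝓝 (A / 2)) := by
  have hcont : Tendsto f (𝓝[≠] t) (𝓝 (f t)) :=
    hf.self_of_nhds.continuousAt.tendsto.mono_left nhdsWithin_le_nhds
  have hsq : Tendsto (fun x => (x - t) ^ 2) (𝓝[≠] t) (𝓝 0) := by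
    have : Continuous fun x : ℝ => (x - t) ^ 2 := by fun_prop
    simpa using this.tendsto t |>.mono_left nhdsWithin_le_nhds
  refine HasDerivAt.lhopital_zero_nhdsNE (f' := f') (g' := fun x => 2 * (x - t))
    ((hf.filter_mono nhdsWithin_le_nhds).mono fun x hx => hx.sub_const _)
    (Eventually.of_forall fun x => ?_) ?_ (by simpa using hcont.sub_const (f t)) hsq ?_
  · simpa using ((hasDerivAt_id x).sub_const t).fun_pow 2
  · filter_upwards [self_mem_nhdsWithin] with x hx
    exact mul_ne_zero two_ne_zero (sub_ne_zero.2 hx)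
  · refine ((hasDerivAt_iff_tendsto_slope.1 hf').div_const 2).congr fun x => ?_
    rw [slope_def_field, hf0, sub_zero, div_div, mul_comm 2]

/-! ### The first-derivative test -/

section FirstDerivativeTest

variable {a b μ : ℝ} {c : ℂ} {F : ℝ → ℂ} {p p' : ℝ → ℝ}

theorem hasDerivAt_mul_inv {x : ℝ} (hF : HasDerivAt F (c * p x * F x) x)
    (hp : HasDerivAt p (p' x) x) (hx : p x ≠ 0) :
    HasDerivAt (fun y => F y * ((p y)⁻¹ : ℝ)) (c * F x - F x * (p' x / p x ^ 2 : ℝ)) x := by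
  have hx' : (p x : ℂ) ≠ 0 := ofReal_ne_zero.2 hx
  refine (hF.fun_mul (hp.fun_inv hx).ofReal_comp).congr_deriv ?_
  push_cast
  field_simp
  ring

/-- Integrability comes for free because `-1 / p` is monotone. -/
theorem intervalIntegrable_deriv_div_sq (hab : a ≤ b) (hpc : ContinuousOn p (Icc a b))
    (hp : ∀ x ∈ Ioo a b, HasDerivAt p (p' x) x) (hp' : ∀ x ∈ Ioo a b, 0 ≤ p' x)
    (hp0 : ∀ x ∈ Icc a b, p x ≠ 0) :
    IntervalIntegrable (fun x => p' x / p x ^ 2) volume a b ∧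
      ∫ x in a..b, p' x / p x ^ 2 = (p a)⁻¹ - (p b)⁻¹ := by
  have hcont : ContinuousOn (fun x => -(p x)⁻¹) (Icc a b) := (hpc.inv₀ hp0).neg
  have hderiv : ∀ x ∈ Ioo a b, HasDerivAt (fun x => -(p x)⁻¹) (p' x / p x ^ 2) x := fun x hx =>
    ((hp x hx).fun_inv (hp0 x (Ioo_subset_Icc_self hx))).fun_neg.congr_deriv (by ring)
  have hint : IntervalIntegrable (fun x => p' x / p x ^ 2) volume a b :=
    (intervalIntegrable_iff_integrableOn_Ioc_of_le hab).2 <|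
      integrableOn_deriv_of_nonneg hcont hderiv fun x hx => div_nonneg (hp' x hx) (sq_nonneg _)
  refine ⟨hint, ?_⟩
  rw [integral_eq_sub_of_hasDerivAt_of_le hab hcont hderiv hint]
  ring

/-- Van der Corput's first-derivative test, stated for solutions of `F' = c p F` so that it covers
both `exp (-i l φ)`, with `p = φ'`, and the complex Gaussian, with `p = id`. -/
theorem norm_integral_oscillatory_le (hab : a ≤ b) (hμ : 0 < μ) (hc : c ≠ 0)
    (hFc : ContinuousOn F (Icc a b)) (hF : ∀ x ∈ Ioo a b, HasDerivAt F (c * p x * F x) x)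
    (hF1 : ∀ x ∈ Icc a b, ‖F x‖ ≤ 1) (hpc : ContinuousOn p (Icc a b))
    (hp : ∀ x ∈ Ioo a b, HasDerivAt p (p' x) x) (hp' : ∀ x ∈ Ioo a b, 0 ≤ p' x)
    (hpμ : ∀ x ∈ Icc a b, μ ≤ |p x|) :
    ‖∫ x in a..b, F x‖ ≤ 4 / (μ * ‖c‖) := by
  have hp0 : ∀ x ∈ Icc a b, p x ≠ 0 := fun x hx => abs_pos.1 (hμ.trans_le (hpμ x hx))
  obtain ⟨hint, hval⟩ := intervalIntegrable_deriv_div_sq hab hpc hp hp' hp0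
  have hFint : IntervalIntegrable F volume a b :=
    hFc.intervalIntegrable_of_Icc hab
  have hFint' : IntervalIntegrable (fun x => F x * (p' x / p x ^ 2 : ℝ)) volume a b :=
    IntervalIntegrable.continuousOn_mul ⟨hint.1.ofReal, hint.2.ofReal⟩ (by rwa [uIcc_of_le hab])
  have hparts : c * ∫ x in a..b, F x
      = F b * ((p b)⁻¹ : ℝ) - F a * ((p a)⁻¹ : ℝ) + ∫ x in a..b, F x * (p' x / p x ^ 2 : ℝ) := by
    rw [← sub_eq_iff_eq_add, ← intervalIntegral.integral_const_mul,
      ← intervalIntegral.integral_sub (hFint.const_mul c) hFint']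
    exact integral_eq_sub_of_hasDerivAt_of_le hab
      (hFc.mul (continuous_ofReal.comp_continuousOn (hpc.inv₀ hp0)))
      (fun x hx => hasDerivAt_mul_inv (hF x hx) (hp x hx) (hp0 x (Ioo_subset_Icc_self hx)))
      ((hFint.const_mul c).sub hFint')
  have hrem : ‖∫ x in a..b, F x * (p' x / p x ^ 2 : ℝ)‖ ≤ (p a)⁻¹ - (p b)⁻¹ := by
    rw [← hval]
    refine intervalIntegral.norm_integral_le_of_norm_le hab ?_ hint
    filter_upwards [compl_mem_ae_iff.2 (measure_singleton b)] with x hxb hx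
    have hnonneg : 0 ≤ p' x / p x ^ 2 :=
      div_nonneg (hp' x ⟨hx.1, hx.2.lt_of_ne hxb⟩) (sq_nonneg _)
    rw [norm_mul, norm_real, Real.norm_of_nonneg hnonneg]
    exact mul_le_of_le_one_left hnonneg (hF1 x (Ioc_subset_Icc_self hx))
  have hinv : ∀ x ∈ Icc a b, |(p x)⁻¹| ≤ μ⁻¹ := fun x hx => by
    rw [abs_inv]
    exact inv_anti₀ hμ (hpμ x hx)
  have hend : ∀ x ∈ Icc a b, ‖F x * ((p x)⁻¹ : ℝ)‖ ≤ μ⁻¹ := fun x hx => by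
    rw [norm_mul, norm_real, Real.norm_eq_abs]
    exact (mul_le_of_le_one_left (abs_nonneg _) (hF1 x hx)).trans (hinv x hx)
  have ha := left_mem_Icc.2 hab
  have hb := right_mem_Icc.2 hab
  rw [← div_div, le_div_iff₀ (norm_pos_iff.2 hc), ← norm_mul, mul_comm, hparts, div_eq_mul_inv]
  linarith [norm_add_le (F b * ((p b)⁻¹ : ℝ) - F a * ((p a)⁻¹ : ℝ))
      (∫ x in a..b, F x * (p' x / p x ^ 2 : ℝ)),
    norm_sub_le (F b * ((p b)⁻¹ : ℝ)) (F a * ((p a)⁻¹ : ℝ)), hend a ha, hend b hb,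
    (abs_le.1 (hinv a ha)).2, (abs_le.1 (hinv b hb)).1]

theorem norm_integral_oscillatory_sub_le {u v : ℝ} (hau : a ≤ u) (huv : u ≤ v)
    (hvb : v ≤ b) (hμ : 0 < μ) (hc : c ≠ 0) (hFc : ContinuousOn F (Icc a b))
    (hF : ∀ x ∈ Ioo a b, HasDerivAt F (c * p x * F x) x) (hF1 : ∀ x ∈ Icc a b, ‖F x‖ ≤ 1)
    (hpc : ContinuousOn p (Icc a b)) (hp : ∀ x ∈ Ioo a b, HasDerivAt p (p' x) x)
    (hp' : ∀ x ∈ Ioo a b, 0 ≤ p' x) (hu : p u ≤ -μ) (hv : μ ≤ p v) :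
    ‖(∫ x in a..b, F x) - ∫ x in u..v, F x‖ ≤ 8 / (μ * ‖c‖) := by
  have hmono : MonotoneOn p (Icc a b) :=
    monotoneOn_of_hasDerivWithinAt_nonneg (convex_Icc a b) hpc
      (fun x hx => (hp x (by simpa using hx)).hasDerivWithinAt)
      (fun x hx => hp' x (by simpa using hx))
  have hmemu : u ∈ Icc a b := ⟨hau, huv.trans hvb⟩
  have hmemv : v ∈ Icc a b := ⟨hau.trans huv, hvb⟩
  have hint : ∀ {x y}, x ∈ Icc a b → y ∈ Icc a b → IntervalIntegrable F volume x y :=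
    fun hx hy => (hFc.mono (uIcc_subset_Icc hx hy)).intervalIntegrable
  have hmema := left_mem_Icc.2 (hmemu.1.trans hmemu.2)
  have hmemb := right_mem_Icc.2 (hmemu.1.trans hmemu.2)
  have hpiece : ∀ {x y}, x ≤ y → x ∈ Icc a b → y ∈ Icc a b → (∀ z ∈ Icc x y, μ ≤ |p z|) →
      ‖∫ z in x..y, F z‖ ≤ 4 / (μ * ‖c‖) := fun hxy hx hy hpμ =>
    have hIcc := Icc_subset_Icc hx.1 hy.2
    have hIoo := Ioo_subset_Ioo hx.1 hy.2
    norm_integral_oscillatory_le hxy hμ hc (hFc.mono hIcc) (fun z hz => hF z (hIoo hz))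
      (fun z hz => hF1 z (hIcc hz)) (hpc.mono hIcc) (fun z hz => hp z (hIoo hz))
      (fun z hz => hp' z (hIoo hz)) hpμ
  have hleft := hpiece hau hmema hmemu fun z hz => le_abs.2 <| Or.inr <| by
    linarith [hmono ⟨hz.1, hz.2.trans hmemu.2⟩ hmemu hz.2]
  have hright := hpiece hvb hmemv hmemb fun z hz => le_abs.2 <| Or.inl <|
    hv.trans (hmono hmemv ⟨hmemv.1.trans hz.1, hz.2⟩ hz.1)
  rw [integral_interval_sub_interval_comm (hint hmema hmemb) (hint hmemu hmemv)
    (hint hmema hmemu), integral_symm v b, sub_neg_eq_add]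
  calc _ ≤ 4 / (μ * ‖c‖) + 4 / (μ * ‖c‖) := norm_add_le_of_le hleft hright
    _ = 8 / (μ * ‖c‖) := by ring

end FirstDerivativeTest

/-! ### Gaussian integrals on the imaginary axis -/

theorem norm_cexp_neg_mul_sq_le_one {b : ℂ} (hb : 0 ≤ b.re) (x : ℝ) :
    ‖cexp (-b * (x : ℂ) ^ 2)‖ ≤ 1 := by
  rw [norm_cexp_neg_mul_sq, Real.exp_le_one_iff]
  nlinarith [mul_nonneg hb (sq_nonneg x)]

theorem norm_integral_cexp_neg_mul_sq_sub_le {b : ℂ} (hb : 0 ≤ b.re) (hb0 : b ≠ 0) {M R : ℝ}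
    (hM : 0 < M) (hMR : M ≤ R) :
    ‖(∫ x : ℝ in -R..R, cexp (-b * (x : ℂ) ^ 2)) - ∫ x : ℝ in -M..M, cexp (-b * (x : ℂ) ^ 2)‖
      ≤ 4 / (M * ‖b‖) := by
  have hderiv : ∀ x : ℝ, HasDerivAt (fun x : ℝ => cexp (-b * (x : ℂ) ^ 2))
      (-2 * b * (id x : ℝ) * cexp (-b * (x : ℂ) ^ 2)) x := fun x => by
    refine ((((hasDerivAt_id x).ofReal_comp).pow 2).const_mul (-b)).cexp.congr_deriv ?_
    simp only [id_eq, Pi.pow_apply, Nat.cast_ofNat, Nat.add_one_sub_one, pow_one, ofReal_one,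
      mul_one]
    ring
  refine (norm_integral_oscillatory_sub_le (c := -2 * b) (neg_le_neg hMR)
    (by linarith) hMR hM (by simpa using hb0) (by fun_prop) (fun x _ => hderiv x)
    (fun x _ => norm_cexp_neg_mul_sq_le_one hb x) continuousOn_id (fun x _ => hasDerivAt_id x)
    (fun _ _ => zero_le_one) le_rfl le_rfl).trans_eq ?_
  rw [norm_mul, norm_neg, Complex.norm_ofNat]
  field_simp
  norm_num

theorem pi_div_mem_slitPlane {b : ℂ} (hb : 0 ≤ b.re) (hb0 : b ≠ 0) : (π / b : ℂ) ∈ slitPlane := by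
  have hsq : 0 < normSq b := normSq_pos.2 hb0
  rw [mem_slitPlane_iff, div_eq_mul_inv, re_ofReal_mul, im_ofReal_mul, inv_re, inv_im]
  rcases hb.lt_or_eq with hre | hre
  · exact Or.inl (by positivity)
  · have him : b.im ≠ 0 := fun h => hb0 (Complex.ext hre.symm h)
    exact Or.inr (by simp [Real.pi_ne_zero, him, hb0])

theorem norm_gaussian_sub_integral_le_of_re_pos {b : ℂ} (hb : 0 < b.re) {M : ℝ} (hM : 0 < M) :
    ‖(π / b : ℂ) ^ (1 / 2 : ℂ) - ∫ x : ℝ in -M..M, cexp (-b * (x : ℂ) ^ 2)‖ ≤ 4 / (M * ‖b‖) := by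
  have hb0 : b ≠ 0 := fun h => by simp [h] at hb
  have hlim : Tendsto (fun R : ℝ => ∫ x : ℝ in -R..R, cexp (-b * (x : ℂ) ^ 2)) atTop
      (𝓝 ((π / b : ℂ) ^ (1 / 2 : ℂ))) := by
    rw [← integral_gaussian_complex hb]
    exact intervalIntegral_tendsto_integral (integrable_cexp_neg_mul_sq hb)
      tendsto_neg_atTop_atBot tendsto_id
  refine le_of_tendsto (hlim.sub_const _).norm ?_
  filter_upwards [eventually_ge_atTop M] with R hMR
  exact norm_integral_cexp_neg_mul_sq_sub_le hb.le hb0 hM hMR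

theorem norm_gaussian_sub_integral_le_of_re_nonneg {b : ℂ} (hb : 0 ≤ b.re) (hb0 : b ≠ 0) {M : ℝ}
    (hM : 0 < M) :
    ‖(π / b : ℂ) ^ (1 / 2 : ℂ) - ∫ x : ℝ in -M..M, cexp (-b * (x : ℂ) ^ 2)‖ ≤ 4 / (M * ‖b‖) := by
  have hadd : Tendsto (fun δ : ℝ => b + δ) (𝓝[>] 0) (𝓝 b) := by
    have : Continuous fun δ : ℝ => b + δ := by fun_prop
    simpa using (this.tendsto 0).mono_left nhdsWithin_le_nhds
  have hgauss : ContinuousAt (fun z : ℂ => (π / z : ℂ) ^ (1 / 2 : ℂ)) b :=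
    (continuousAt_const.div continuousAt_id hb0).cpow continuousAt_const
      (pi_div_mem_slitPlane hb hb0)
  have hint : Continuous fun z : ℂ => ∫ x : ℝ in -M..M, cexp (-z * (x : ℂ) ^ 2) :=
    continuous_parametric_intervalIntegral_of_continuous' (by fun_prop) _ _
  have hbound : ContinuousAt (fun z : ℂ => 4 / (M * ‖z‖)) b :=
    continuousAt_const.div (by fun_prop) (by simp [hM.ne', hb0])
  refine le_of_tendsto_of_tendsto ((hgauss.sub hint.continuousAt).norm.tendsto.comp hadd)
    (hbound.tendsto.comp hadd) ?_
  filter_upwards [self_mem_nhdsWithin] with δ (hδ : 0 < δ)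
  exact norm_gaussian_sub_integral_le_of_re_pos (by simpa using by positivity) hM

/-- `integral_gaussian_complex` extended to the imaginary axis, where the integral converges only
conditionally. -/
theorem tendsto_integral_gaussian_of_re_nonneg {b : ℂ} (hb : 0 ≤ b.re) (hb0 : b ≠ 0) :
    Tendsto (fun M : ℝ => ∫ x : ℝ in -M..M, cexp (-b * (x : ℂ) ^ 2)) atTop
      (𝓝 ((π / b : ℂ) ^ (1 / 2 : ℂ))) := by
  have hzero : Tendsto (fun M : ℝ => 4 / (M * ‖b‖)) atTop (𝓝 0) :=
    (tendsto_id.atTop_mul_const (norm_pos_iff.2 hb0)).const_div_atTop 4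
  refine tendsto_iff_norm_sub_tendsto_zero.2 (squeeze_zero_norm' ?_ hzero)
  filter_upwards [eventually_gt_atTop 0] with M hM
  rw [norm_norm, norm_sub_rev]
  exact norm_gaussian_sub_integral_le_of_re_nonneg hb hb0 hM

/-! ### Stationary phase for convex phases -/

/-- The oscillatory factor `e^{-ilφ(x)}` with phase `φ` and large parameter `l`, the integrand of
the stationary phase method. The sign matches the Gaussian `e^{-bv²}` with `b = iA/2`. -/
noncomputable def phaseFactor (φ : ℝ → ℝ) (l x : ℝ) : ℂ := cexp ((-(l * φ x) : ℝ) * I)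

theorem norm_phaseFactor (φ : ℝ → ℝ) (l x : ℝ) : ‖phaseFactor φ l x‖ = 1 :=
  norm_exp_ofReal_mul_I _

theorem phaseFactor_div_phaseFactor (φ : ℝ → ℝ) (l x y : ℝ) :
    phaseFactor φ l x / phaseFactor φ l y = cexp ((-(l * (φ x - φ y)) : ℝ) * I) := by
  rw [phaseFactor, phaseFactor, ← Complex.exp_sub]
  congr 1
  push_cast
  ring

theorem continuousOn_phaseFactor {φ : ℝ → ℝ} {s : Set ℝ} (hφ : ContinuousOn φ s) (l : ℝ) :
    ContinuousOn (phaseFactor φ l) s := by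
  unfold phaseFactor
  fun_prop

theorem hasDerivAt_phaseFactor {φ : ℝ → ℝ} {φ' x : ℝ} (hφ : HasDerivAt φ φ' x) (l : ℝ) :
    HasDerivAt (phaseFactor φ l) (-(l * I) * φ' * phaseFactor φ l x) x := by
  refine (((hφ.const_mul l).fun_neg.ofReal_comp).mul_const I).cexp.congr_deriv ?_
  rw [phaseFactor]
  push_cast
  ring

/-- `φ` is convex on `[a, ∞)`, with first and second derivatives `φ'` and `φ''`. The endpoint `a` is
exempt from differentiability, so that the values to the left of `a` do not matter. -/
structure IsConvexPhase (φ φ' φ'' : ℝ → ℝ) (a : ℝ) : Prop where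
  continuousOn : ContinuousOn φ (Ici a)
  continuousOn_deriv : ContinuousOn φ' (Ici a)
  hasDerivAt : ∀ x ∈ Ioi a, HasDerivAt φ (φ' x) x
  hasDerivAt_deriv : ∀ x ∈ Ioi a, HasDerivAt φ' (φ'' x) x
  deriv2_nonneg : ∀ x ∈ Ioi a, 0 ≤ φ'' x

section StationaryPhase

variable {φ φ' φ'' : ℝ → ℝ} {a t A M : ℝ}

theorem tendsto_add_div_sqrt_nhdsNE (t : ℝ) {v : ℝ} (hv : v ≠ 0) :
    Tendsto (fun l : ℝ => t + v / √l) atTop (𝓝[≠] t) := by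
  refine tendsto_nhdsWithin_iff.2
    ⟨by simpa using (tendsto_sqrt_atTop.const_div_atTop v).const_add t, ?_⟩
  filter_upwards [eventually_gt_atTop 0] with l hl
  simp [hv, (Real.sqrt_pos.2 hl).ne']

theorem tendsto_phaseFactor_rescaled (hφ : ∀ᶠ x in 𝓝 t, HasDerivAt φ (φ' x) x) (hφ't : φ' t = 0)
    (hφ' : HasDerivAt φ' A t) (v : ℝ) :
    Tendsto (fun l => phaseFactor φ l (t + v / √l) / phaseFactor φ l t) atTop
      (𝓝 (cexp (-(A / 2 * I) * (v : ℂ) ^ 2))) := by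
  have hphase : Tendsto (fun l => l * (φ (t + v / √l) - φ t)) atTop (𝓝 (A / 2 * v ^ 2)) := by
    rcases eq_or_ne v 0 with rfl | hv
    · simp
    refine (((tendsto_div_sq_of_hasDerivAt hφ hφ't hφ').comp
      (tendsto_add_div_sqrt_nhdsNE t hv)).mul_const (v ^ 2)).congr' ?_
    filter_upwards [eventually_gt_atTop 0] with l hl
    simp only [Function.comp_apply, add_sub_cancel_left, div_pow, Real.sq_sqrt hl.le]
    field_simp
  have hexp : Continuous fun y : ℝ => cexp ((-y : ℝ) * I) := by fun_prop
  refine ((hexp.tendsto _).comp hphase).congr' ?_ |>.trans_eq ?_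
  · exact Eventually.of_forall fun l => (phaseFactor_div_phaseFactor φ l _ t).symm
  · congr 2
    push_cast
    ring

theorem eventually_add_div_sqrt_mem {s : Set ℝ} (hs : s ∈ 𝓝 t) (M : ℝ) :
    ∀ᶠ l : ℝ in atTop, ∀ v ∈ Icc (-M) M, t + v / √l ∈ s := by
  obtain ⟨ε, hε, hball⟩ := Metric.mem_nhds_iff.1 hs
  filter_upwards [(tendsto_sqrt_atTop.const_div_atTop M).eventually_lt_const hε] with l hl v hv
  refine hball ?_
  rw [Metric.mem_ball, dist_self_add_left, Real.norm_eq_abs, abs_div, abs_of_nonneg (sqrt_nonneg l)]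
  exact (div_le_div_of_nonneg_right (abs_le.2 hv) (sqrt_nonneg l)).trans_lt hl

theorem tendsto_sqrt_mul_integral_window (hφ : ∀ᶠ x in 𝓝 t, HasDerivAt φ (φ' x) x)
    (hφ't : φ' t = 0) (hφ' : HasDerivAt φ' A t) (hM : 0 ≤ M) :
    Tendsto (fun l => √l * (∫ x in (t - M / √l)..(t + M / √l), phaseFactor φ l x) /
        phaseFactor φ l t) atTop
      (𝓝 (∫ v : ℝ in -M..M, cexp (-(A / 2 * I) * (v : ℂ) ^ 2))) := by
  have hlim := intervalIntegral.tendsto_integral_filter_of_dominated_convergence (μ := volume)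
    (a := -M) (b := M) (fun _ => 1)
    (F := fun l v => phaseFactor φ l (t + v / √l) / phaseFactor φ l t) (l := atTop) ?_
    (Eventually.of_forall fun l => Eventually.of_forall fun v _ => by
      rw [norm_div, norm_phaseFactor, norm_phaseFactor, div_one])
    intervalIntegrable_const
    (Eventually.of_forall fun v _ => tendsto_phaseFactor_rescaled hφ hφ't hφ' v)
  · refine hlim.congr' ?_
    filter_upwards [eventually_gt_atTop 0] with l hl
    rw [intervalIntegral.integral_div, integral_comp_add_div _ (Real.sqrt_pos.2 hl).ne', neg_div,
      ← sub_eq_add_neg, real_smul]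
  · filter_upwards [eventually_add_div_sqrt_mem hφ M] with l hl
    rw [uIoc_of_le (neg_le_self hM)]
    refine ContinuousOn.aestronglyMeasurable (fun v hv => ContinuousAt.continuousWithinAt ?_)
      measurableSet_Ioc
    have hcont : ContinuousAt (phaseFactor φ l) (t + v / √l) :=
      (hasDerivAt_phaseFactor (hl v (Ioc_subset_Icc_self hv)) l).continuousAt
    have hscale : ContinuousAt (fun v => t + v / √l) v := by fun_prop
    exact (hcont.comp_of_eq hscale rfl).div_const _

theorem eventually_half_slope_mul_le (hφ't : φ' t = 0) (hφ' : HasDerivAt φ' A t) (hA : 0 < A) :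
    ∀ᶠ h in 𝓝[>] 0, φ' (t - h) ≤ -(A / 2 * h) ∧ A / 2 * h ≤ φ' (t + h) := by
  have hlin : ∀ᶠ h in 𝓝 0, |φ' (t + h) - h * A| ≤ A / 2 * |h| := by
    simpa [hφ't] using (hasDerivAt_iff_isLittleO_nhds_zero.1 hφ').def (half_pos hA)
  have hneg : Tendsto (fun h : ℝ => -h) (𝓝 0) (𝓝 0) := by
    simpa using (continuous_neg (G := ℝ)).tendsto 0
  filter_upwards [self_mem_nhdsWithin, nhdsWithin_le_nhds hlin,
    nhdsWithin_le_nhds (hneg.eventually hlin)] with h (hh : 0 < h) hright hleft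
  rw [abs_neg, abs_of_pos hh, ← sub_eq_add_neg] at hleft
  rw [abs_of_pos hh] at hright
  constructor <;> linarith [(abs_le.1 hleft).2, (abs_le.1 hright).1]

theorem IsConvexPhase.norm_integral_sub_integral_le (hφ : IsConvexPhase φ φ' φ'' a)
    {u v μ l b : ℝ} (hau : a ≤ u) (huv : u ≤ v) (hvb : v ≤ b) (hμ : 0 < μ) (hl : 0 < l)
    (hu : φ' u ≤ -μ) (hv : μ ≤ φ' v) :
    ‖(∫ x in a..b, phaseFactor φ l x) - ∫ x in u..v, phaseFactor φ l x‖ ≤ 8 / (μ * l) := by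
  have hnorm : ‖-((l : ℂ) * I)‖ = l := by simp [abs_of_pos hl]
  have h := norm_integral_oscillatory_sub_le hau huv hvb hμ
    (norm_pos_iff.1 (hnorm.symm ▸ hl))
    (continuousOn_phaseFactor (hφ.continuousOn.mono Icc_subset_Ici_self) l)
    (fun x hx => hasDerivAt_phaseFactor (hφ.hasDerivAt x hx.1) l)
    (fun x _ => (norm_phaseFactor φ l x).le)
    (hφ.continuousOn_deriv.mono Icc_subset_Ici_self) (fun x hx => hφ.hasDerivAt_deriv x hx.1)
    (fun x hx => hφ.deriv2_nonneg x hx.1) hu hv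
  rwa [hnorm] at h

theorem IsConvexPhase.eventually_norm_sub_window_le (hφ : IsConvexPhase φ φ' φ'' a) (hat : a < t)
    (hφ't : φ' t = 0) (hA : 0 < φ'' t) (hM : 0 < M) :
    ∀ᶠ l : ℝ in atTop, ∀ z : ℂ,
      Tendsto (fun R => ∫ x in a..R, phaseFactor φ l x) atTop (𝓝 z) →
        ‖√l * z / phaseFactor φ l t -
          √l * (∫ x in (t - M / √l)..(t + M / √l), phaseFactor φ l x) / phaseFactor φ l t‖
          ≤ 16 / (φ'' t * M) := by
  have hwidth : Tendsto (fun l : ℝ => M / √l) atTop (𝓝[>] 0) := by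
    refine tendsto_nhdsWithin_iff.2 ⟨tendsto_sqrt_atTop.const_div_atTop M, ?_⟩
    filter_upwards [eventually_gt_atTop 0] with l hl
    exact div_pos hM (Real.sqrt_pos.2 hl)
  filter_upwards [eventually_gt_atTop 0, hwidth.eventually <|
      eventually_half_slope_mul_le hφ't (hφ.hasDerivAt_deriv t hat) hA,
    hwidth.eventually <| Ioo_mem_nhdsGT (sub_pos.2 hat)] with l hl hslope hsmall z hz
  have hs : 0 < √l := Real.sqrt_pos.2 hl
  have hdist : ‖z - ∫ x in (t - M / √l)..(t + M / √l), phaseFactor φ l x‖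
      ≤ 8 / (φ'' t / 2 * (M / √l) * l) := by
    refine le_of_tendsto (hz.sub_const _).norm ?_
    filter_upwards [eventually_ge_atTop (t + M / √l)] with R hR
    exact hφ.norm_integral_sub_integral_le (by linarith [hsmall.2])
      (by linarith [hsmall.1]) hR (by positivity) hl hslope.1 hslope.2
  rw [← sub_div, ← mul_sub, norm_div, norm_phaseFactor, div_one, norm_mul, norm_real,
    Real.norm_of_nonneg hs.le]
  calc _ ≤ √l * (8 / (φ'' t / 2 * (M / √l) * l)) := by gcongr
    _ = 16 / (φ'' t * M) := by
      field_simp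
      rw [Real.sq_sqrt hl.le]
      ring

theorem IsConvexPhase.tendsto_sqrt_mul_integral {ι : Type*} {L : Filter ι} {l : ι → ℝ} {J : ι → ℂ}
    (hφ : IsConvexPhase φ φ' φ'' a) (hat : a < t) (hφ't : φ' t = 0) (hA : 0 < φ'' t)
    (hl : Tendsto l L atTop)
    (hJ : ∀ᶠ i in L, Tendsto (fun R => ∫ x in a..R, phaseFactor φ (l i) x) atTop (𝓝 (J i))) :
    Tendsto (fun i => √(l i) * J i / phaseFactor φ (l i) t) L
      (𝓝 ((π / (φ'' t / 2 * I)) ^ (1 / 2 : ℂ))) := by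
  have hφt : ∀ᶠ x in 𝓝 t, HasDerivAt φ (φ' x) x :=
    (eventually_gt_nhds hat).mono hφ.hasDerivAt
  refine tendsto_of_tendsto_of_eventually_dist_le (l' := atTop)
    (F := fun M i => √(l i) * (∫ x in (t - M / √(l i))..(t + M / √(l i)), phaseFactor φ (l i) x) /
      phaseFactor φ (l i) t) (e := fun M => 16 / (φ'' t * M)) ?_
    (tendsto_integral_gaussian_of_re_nonneg (by simp) (by simp [hA.ne'])) ?_
    ((tendsto_id.const_mul_atTop hA).const_div_atTop 16)
  · filter_upwards [eventually_ge_atTop 0] with M hM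
    exact (tendsto_sqrt_mul_integral_window hφt hφ't (hφ.hasDerivAt_deriv t hat) hM).comp hl
  · filter_upwards [eventually_gt_atTop 0] with M hM
    filter_upwards [hJ, hl.eventually <|
      hφ.eventually_norm_sub_window_le hat hφ't hA hM] with i hJi hi
    rw [dist_eq_norm]
    exact hi _ hJi

theorem norm_pi_div_mul_I_cpow_half (hA : 0 < A) :
    ‖(π / (A / 2 * I) : ℂ) ^ (1 / 2 : ℂ)‖ = √(2 * π / A) := by
  have hhalf : (1 / 2 : ℂ) = ((1 / 2 : ℝ) : ℂ) := by norm_num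
  rw [hhalf, norm_cpow_real, Real.sqrt_eq_rpow]
  congr 1
  simp only [Complex.norm_div, Complex.norm_mul, norm_real, norm_eq_abs, norm_I, mul_one,
    Complex.norm_ofNat, abs_of_pos hA, abs_of_pos Real.pi_pos]
  field_simp

theorem IsConvexPhase.tendsto_sqrt_mul_norm_integral {ι : Type*} {L : Filter ι} {l : ι → ℝ}
    {J : ι → ℂ} (hφ : IsConvexPhase φ φ' φ'' a) (hat : a < t) (hφ't : φ' t = 0) (hA : 0 < φ'' t)
    (hl : Tendsto l L atTop)
    (hJ : ∀ᶠ i in L, Tendsto (fun R => ∫ x in a..R, phaseFactor φ (l i) x) atTop (𝓝 (J i))) :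
    Tendsto (fun i => √(l i) * ‖J i‖) L (𝓝 √(2 * π / φ'' t)) := by
  rw [← norm_pi_div_mul_I_cpow_half hA]
  refine (hφ.tendsto_sqrt_mul_integral hat hφ't hA hl hJ).norm.congr fun i => ?_
  rw [norm_div, norm_phaseFactor, div_one, norm_mul, norm_real,
    Real.norm_of_nonneg (sqrt_nonneg _)]

end StationaryPhase

/-! ### The quintic phase -/

/-- The phase `2Kτ² + τ⁴ + cτ⁵` in the variable `u = τ²`. -/
noncomputable def reducedQuinticPhase (K c u : ℝ) : ℝ := 2 * K * u + u ^ 2 + c * u ^ (5 / 2 : ℝ)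

theorem isConvexPhase_reducedQuinticPhase (K : ℝ) {c : ℝ} (hc : 0 ≤ c) :
    IsConvexPhase (reducedQuinticPhase K c)
      (fun u => 2 * K + 2 * u + 5 / 2 * c * u ^ (3 / 2 : ℝ))
      (fun u => 2 + 15 / 4 * c * u ^ (1 / 2 : ℝ)) 0 where
  continuousOn := by
    unfold reducedQuinticPhase
    fun_prop (disch := norm_num)
  continuousOn_deriv := by fun_prop (disch := norm_num)
  hasDerivAt u _ := by
    refine (((hasDerivAt_id u).const_mul (2 * K)).fun_add (hasDerivAt_pow 2 u)).fun_add
      ((hasDerivAt_rpow_const (p := 5 / 2) (Or.inr (by norm_num))).const_mul c) |>.congr_deriv ?_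
    norm_num
    ring
  hasDerivAt_deriv u _ := by
    refine ((((hasDerivAt_id u).const_mul 2).const_add (2 * K)).fun_add
      ((hasDerivAt_rpow_const (p := 3 / 2) (Or.inr (by norm_num))).const_mul (5 / 2 * c)))
      |>.congr_deriv ?_
    norm_num
    ring
  deriv2_nonneg u (hu : 0 < u) := by positivity

theorem sq_rpow_div_two {x : ℝ} (hx : 0 ≤ x) (n : ℕ) : (x ^ 2) ^ (n / 2 : ℝ) = x ^ n := by
  rw [← Real.rpow_natCast x 2, ← Real.rpow_mul hx, ← Real.rpow_natCast]
  congr 1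
  push_cast
  ring

theorem phaseFactor_reducedQuinticPhase_sq (K c S : ℝ) {τ : ℝ} (hτ : 0 ≤ τ) :
    phaseFactor (reducedQuinticPhase K c) (S ^ 5 / 2) (τ ^ 2)
      = cexp (-(I / 2) * (S : ℂ) ^ 5 * ((2 * K * τ ^ 2 + τ ^ 4 + c * τ ^ 5 : ℝ) : ℂ)) := by
  have h := sq_rpow_div_two hτ 5
  norm_num at h
  rw [phaseFactor, reducedQuinticPhase, h]
  congr 1
  push_cast
  ring

theorem two_mul_integral_comp_sq_mul (f : ℝ → ℂ) {R : ℝ} (hR : 0 ≤ R) :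
    2 * ∫ τ in 0..R, f (τ ^ 2) * τ = ∫ u in 0..R ^ 2, f u := by
  have hderiv : ∀ τ : ℝ, HasDerivAt (fun τ => τ ^ 2) (2 * τ) τ := fun τ => by
    simpa using hasDerivAt_pow 2 τ
  have hsubst := integral_deriv_smul_comp_of_deriv_nonneg (g := f) (a := 0) (b := R)
    (continuous_pow 2).continuousOn (fun τ _ => hderiv τ) fun τ hτ => by
      rw [min_eq_left hR] at hτ
      linarith [hτ.1]
  rw [zero_pow two_ne_zero] at hsubst
  rw [← hsubst, ← intervalIntegral.integral_const_mul]
  congr 1 with τ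
  rw [real_smul, ofReal_mul, ofReal_ofNat, Function.comp_apply]
  ring

theorem tendsto_integral_phaseFactor_reducedQuinticPhase {K c S : ℝ} {z : ℂ}
    (hz : Tendsto (fun R : ℝ => 2 * ∫ τ in (0 : ℝ)..R,
      cexp (-(I / 2) * (S : ℂ) ^ 5 * ((2 * K * τ ^ 2 + τ ^ 4 + c * τ ^ 5 : ℝ) : ℂ)) * τ)
      atTop (𝓝 z)) :
    Tendsto (fun R => ∫ u in 0..R, phaseFactor (reducedQuinticPhase K c) (S ^ 5 / 2) u) atTop
      (𝓝 z) := by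
  refine (hz.comp tendsto_sqrt_atTop).congr' ?_
  filter_upwards [eventually_ge_atTop 0] with R hR
  rw [← Real.sq_sqrt hR, ← two_mul_integral_comp_sq_mul _ (sqrt_nonneg R), Real.sq_sqrt hR]
  refine congrArg (2 * ·) (intervalIntegral.integral_congr fun τ hτ => ?_)
  rw [uIcc_of_le (sqrt_nonneg R)] at hτ
  exact congrArg (· * (τ : ℂ)) (phaseFactor_reducedQuinticPhase_sq K c S hτ.1).symm

theorem tendsto_rpow_mul_norm_quintic_integral {K c t : ℝ} (hc : 0 ≤ c) (ht : 0 < t)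
    (hroot : K + t ^ 2 + 5 / 4 * c * t ^ 3 = 0) {J : ℝ → ℂ}
    (hJ : ∀ᶠ S : ℝ in atTop, Tendsto (fun R : ℝ => 2 * ∫ τ in (0 : ℝ)..R,
      cexp (-(I / 2) * (S : ℂ) ^ 5 * ((2 * K * τ ^ 2 + τ ^ 4 + c * τ ^ 5 : ℝ) : ℂ)) * τ)
      atTop (𝓝 (J S))) :
    Tendsto (fun S : ℝ => S ^ (5 / 2 : ℝ) * ‖J S‖) atTop
      (𝓝 √(2 * π / (1 + 15 / 8 * c * t))) := by
  have hcube : (t ^ 2) ^ (3 / 2 : ℝ) = t ^ 3 := mod_cast sq_rpow_div_two ht.le 3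
  have hself : (t ^ 2) ^ (1 / 2 : ℝ) = t := by simpa using sq_rpow_div_two ht.le 1
  have hlim := (isConvexPhase_reducedQuinticPhase K hc).tendsto_sqrt_mul_norm_integral
    (t := t ^ 2) (by positivity) (by rw [hcube]; linear_combination 2 * hroot) (by positivity)
    ((tendsto_pow_atTop (n := 5) (by norm_num)).atTop_div_const two_pos)
    (hJ.mono fun _ => tendsto_integral_phaseFactor_reducedQuinticPhase)
  rw [hself] at hlim
  convert! (hlim.const_mul √2).congr' ?_ using 2
  · rw [← Real.sqrt_mul zero_le_two]
    congr 1
    field_simp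
    ring
  · filter_upwards [eventually_ge_atTop 0] with S hS
    rw [← mul_assoc, ← Real.sqrt_mul zero_le_two, mul_div_cancel₀ _ two_ne_zero,
      Real.sqrt_eq_rpow, ← Real.rpow_natCast, ← Real.rpow_mul hS]
    norm_num

theorem two_mul_mul_sqrt_eq_sqrt {t : ℝ} (ht : 0 < t) (q : ℝ) :
    2 * t * √(4 * π / (8 * t ^ 2 * q)) = √(2 * π / q) := by
  have hq : 2 * π / q = (2 * t) ^ 2 * (4 * π / (8 * t ^ 2 * q)) := by
    field_simp
    norm_num
  rw [hq, Real.sqrt_mul (sq_nonneg _), Real.sqrt_sq (by positivity)]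

/-- With `g(τ) = 2Kτ² + τ⁴ + (8/(15√γ))τ⁵`, `K < 0`, and `τ₀ > 0` the
positive stationary point (`K + τ₀² + (2/(3√γ))τ₀³ = 0`, so `g''(τ₀) = 8τ₀²(1+τ₀/√γ)`),
the stationary-phase approximation of `J(S) = 2∫_0^∞ e^{-(i/2)S⁵g(τ)} τ dτ` gives
`S^{5/2} |J(S)| → 2τ₀ √(4π/g''(τ₀)) = √(2π/(1+τ₀/√γ))` as `S → +∞`. -/
theorem stationary_phase_amplitude (γ K τ₀ : ℝ) (hγ : 0 < γ) (hK : K < 0)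
    (hτ₀ : 0 < τ₀) (hroot : K + τ₀ ^ 2 + (2 / (3 * Real.sqrt γ)) * τ₀ ^ 3 = 0)
    (J : ℝ → ℂ)
    (hJ : ∀ S : ℝ, 0 < S →
      Tendsto (fun R : ℝ =>
          2 * ∫ τ in (0 : ℝ)..R,
            Complex.exp (-(I / 2) * (S : ℂ) ^ 5 *
              ((2 * K * τ ^ 2 + τ ^ 4 + (8 / (15 * Real.sqrt γ)) * τ ^ 5 : ℝ) : ℂ)) * τ)
        atTop (nhds (J S))) :
    Tendsto (fun S : ℝ => S ^ ((5 : ℝ) / 2) * ‖J S‖) atTop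
      (nhds (2 * τ₀ * Real.sqrt (4 * Real.pi / (8 * τ₀ ^ 2 * (1 + τ₀ / Real.sqrt γ))))) ∧
    2 * τ₀ * Real.sqrt (4 * Real.pi / (8 * τ₀ ^ 2 * (1 + τ₀ / Real.sqrt γ)))
      = Real.sqrt (2 * Real.pi / (1 + τ₀ / Real.sqrt γ)) := by
  have hamp := two_mul_mul_sqrt_eq_sqrt hτ₀ (1 + τ₀ / √γ)
  refine ⟨?_, hamp⟩
  have hstat : K + τ₀ ^ 2 + 5 / 4 * (8 / (15 * √γ)) * τ₀ ^ 3 = 0 := by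
    rw [← hroot]
    field_simp
    ring
  have hcurv : 15 / 8 * (8 / (15 * √γ)) * τ₀ = τ₀ / √γ := by field_simp
  rw [hamp, ← hcurv]
  exact tendsto_rpow_mul_norm_quintic_integral (by positivity) hτ₀ hstat
    ((eventually_gt_atTop 0).mono hJ)
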